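/- Let 0 ≤ A < 1/3, let s* > 2 and 0 < d* < 2 satisfy F₂(s*, d*; A) = 0, and let c* > 0 satisfy F₁(s*, d*; c*) = 0 (equivalently c*² = (4 − d*²)²(s*² − 4)(3A·d* + s*)/(16(s*² − d*²))). Set r* = (1/4)√((s*² − 4)(4 − d*²)) > 0, x* = −A − d*·s*/4, and ω = c*/r*². Then for any θ₀ ∈ ℝ the curve γ(t) = (x*, r*·cos(ωt + θ₀), r*·sin(ωt + θ₀)) avoids the segment S = {(ξ,0,0) : −1−A ≤ ξ ≤ 1−A}, satisfies the equations of motion γ''(t) = −∇U(γ(t)) for all t ∈ ℝ, and is periodic with period T = 2π·r*²/c*; i.e., it is a circular orbit of the particle around the non-homogeneous segment. -/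

import Mathlib

/-- The scaled potential $U = 3Ad - \frac14(3Ads+4)\ln\frac{s+2}{s-2}$ of the
non-homogeneous segment, as a function on Euclidean $\mathbb{R}^3$, where
$s = R_1 + R_2$, $d = R_1 - R_2$ with $R_1, R_2$ the distances to the endpoints
$(1-A,0,0)$ and $(-1-A,0,0)$. -/
noncomputable def U (A : ℝ) (p : EuclideanSpace ℝ (Fin 3)) : ℝ :=
  let R₁ := Real.sqrt ((p 0 + A - 1) ^ 2 + (p 1) ^ 2 + (p 2) ^ 2)
  let R₂ := Real.sqrt ((p 0 + A + 1) ^ 2 + (p 1) ^ 2 + (p 2) ^ 2)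
  3 * A * (R₁ - R₂) -
    (1 / 4) * (3 * A * (R₁ - R₂) * (R₁ + R₂) + 4) *
      Real.log (((R₁ + R₂) + 2) / ((R₁ + R₂) - 2))

/-- $F_1(s,d;c) = (d^2-4)^2(s^2-4)(3Ad+s) + 16c^2(d^2-s^2)$. -/
noncomputable def F₁ (c A s d : ℝ) : ℝ :=
  (d ^ 2 - 4) ^ 2 * (s ^ 2 - 4) * (3 * A * d + s) + 16 * c ^ 2 * (d ^ 2 - s ^ 2)

/-- $F_2(s,d;A) = 3As + d + \frac34 A (d^2-s^2)\ln\frac{s+2}{s-2}$. -/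
noncomputable def F₂ (A s d : ℝ) : ℝ :=
  3 * A * s + d + (3 / 4) * A * (d ^ 2 - s ^ 2) * Real.log ((s + 2) / (s - 2))

/-!
Write `s` and `d` for the sum and the difference of the distances to the two ends of the segment.
The gradients of these distances are unit vectors, so by the chain rule the gradient of any function
`V(s, d)` has axial component `-(d (s² - 4) V_s + s (4 - d²) V_d) / (s² - d²)` and radial component
`4 (s V_s - d V_d) / (s² - d²)` times the distance to the axis. For `U` the axial component is
`-4 F₂ / (s² - d²)`, while the logarithm cancels from the radial one. Hence `F₂ = 0` says that the
force points at the centre of the circle, and `F₁ = 0` that it is the centripetal force of the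
rotation with angular momentum `c`.
-/

local notation "ℝ³" => EuclideanSpace ℝ (Fin 3)

section Gradient

variable {E : Type*} [NormedAddCommGroup E] [InnerProductSpace ℝ E] [CompleteSpace E]

lemma hasGradientAt_dist {p a : E} (h : p ≠ a) :
    HasGradientAt (fun q => dist q a) ((dist p a)⁻¹ • (p - a)) p := by
  have hpa : ‖p - a‖ ≠ 0 := norm_ne_zero_iff.2 (sub_ne_zero.2 h)
  have hsqrt := (((hasFDerivAt_id p).sub_const a).norm_sq).sqrt (pow_ne_zero 2 hpa)
  simp only [id, ← dist_eq_norm, Real.sqrt_sq dist_nonneg] at hsqrt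
  refine hasGradientAt_iff_hasFDerivAt.2 (hsqrt.congr_fderiv ?_)
  ext v
  simp only [map_sub, ContinuousLinearMap.comp_id, smul_apply, sub_apply, coe_innerSL_apply,
    nsmul_eq_mul, Nat.cast_ofNat, smul_eq_mul, map_smul, InnerProductSpace.toDual_apply_apply]
  field_simp

lemma hasGradientAt_comp_prodMk {V : ℝ × ℝ → ℝ} {f g : E → ℝ} {a b : ℝ} {f' g' p : E}
    (hV : HasFDerivAt V
      (a • ContinuousLinearMap.fst ℝ ℝ ℝ + b • ContinuousLinearMap.snd ℝ ℝ ℝ) (f p, g p))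
    (hf : HasGradientAt f f' p) (hg : HasGradientAt g g' p) :
    HasGradientAt (fun q => V (f q, g q)) (a • f' + b • g') p := by
  refine hasGradientAt_iff_hasFDerivAt.2
    ((hV.comp p (hf.hasFDerivAt.prodMk hg.hasFDerivAt)).congr_fderiv ?_)
  ext v
  simp

end Gradient

section HarmonicMotion

variable {E : Type*} [NormedAddCommGroup E] [NormedSpace ℝ E]

/-- Harmonic motion about the origin with angular velocity `ω` and phase `θ`, along the ellipse with
conjugate semi-diameters `u` and `v`. -/
noncomputable def harmonicMotion (ω θ : ℝ) (u v : E) (t : ℝ) : E :=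
  Real.cos (ω * t + θ) • u + Real.sin (ω * t + θ) • v

lemma hasDerivAt_harmonicMotion (ω θ : ℝ) (u v : E) (t : ℝ) :
    HasDerivAt (harmonicMotion ω θ u v) (harmonicMotion ω θ (ω • v) (-(ω • u)) t) t := by
  have hphase : HasDerivAt (fun t => ω * t + θ) ω t := by
    simpa using ((hasDerivAt_id t).const_mul ω).add_const θ
  refine ((hphase.cos.smul_const u).add (hphase.sin.smul_const v)).congr_deriv ?_
  simp only [harmonicMotion]
  module

lemma deriv_deriv_const_add_harmonicMotion (a : E) (ω θ : ℝ) (u v : E) (t : ℝ) :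
    deriv (deriv fun t => a + harmonicMotion ω θ u v t) t =
      -(ω ^ 2 • harmonicMotion ω θ u v t) := by
  have hvel : (deriv fun t => a + harmonicMotion ω θ u v t) =
      harmonicMotion ω θ (ω • v) (-(ω • u)) :=
    funext fun t => ((hasDerivAt_harmonicMotion ω θ u v t).const_add a).deriv
  rw [hvel, (hasDerivAt_harmonicMotion ω θ _ _ t).deriv]
  simp only [harmonicMotion]
  module

lemma harmonicMotion_periodic {ω : ℝ} (hω : ω ≠ 0) (θ : ℝ) (u v : E) :
    Function.Periodic (harmonicMotion ω θ u v) (2 * Real.pi / ω) := by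
  intro t
  have hphase : ω * (t + 2 * Real.pi / ω) + θ = ω * t + θ + 2 * Real.pi := by
    field_simp
    ring
  simp only [harmonicMotion, hphase, Real.cos_add_two_pi, Real.sin_add_two_pi]

end HarmonicMotion

section BipolarCoordinates

/-- The end `(1 - A, 0, 0)` of the segment, from which `R₁` is measured. -/
noncomputable def rightEnd (A : ℝ) : ℝ³ := !₂[1 - A, 0, 0]

/-- The end `(-1 - A, 0, 0)` of the segment, from which `R₂` is measured. -/
noncomputable def leftEnd (A : ℝ) : ℝ³ := !₂[-1 - A, 0, 0]

/-- The bipolar coordinate `s = R₁ + R₂`. -/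
noncomputable def distSum (A : ℝ) (p : ℝ³) : ℝ := dist p (rightEnd A) + dist p (leftEnd A)

/-- The bipolar coordinate `d = R₁ - R₂`. -/
noncomputable def distDiff (A : ℝ) (p : ℝ³) : ℝ := dist p (rightEnd A) - dist p (leftEnd A)

lemma dist_axis (a : ℝ) (p : ℝ³) :
    dist p !₂[a, 0, 0] = √((p 0 - a) ^ 2 + p 1 ^ 2 + p 2 ^ 2) := by
  simp [EuclideanSpace.dist_eq, Fin.sum_univ_three, Real.dist_eq]

lemma dist_rightEnd (A : ℝ) (p : ℝ³) :
    dist p (rightEnd A) = √((p 0 + A - 1) ^ 2 + p 1 ^ 2 + p 2 ^ 2) := by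
  rw [rightEnd, dist_axis, show p 0 - (1 - A) = p 0 + A - 1 by ring]

lemma dist_leftEnd (A : ℝ) (p : ℝ³) :
    dist p (leftEnd A) = √((p 0 + A + 1) ^ 2 + p 1 ^ 2 + p 2 ^ 2) := by
  rw [leftEnd, dist_axis, show p 0 - (-1 - A) = p 0 + A + 1 by ring]

lemma dist_rightEnd_leftEnd (A : ℝ) : dist (rightEnd A) (leftEnd A) = 2 := by
  have haxial : rightEnd A 0 + A + 1 = 2 := by
    simp only [rightEnd, PiLp.toLp_apply, Matrix.cons_val]
    ring
  rw [dist_leftEnd, haxial]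
  simp [rightEnd]

lemma ne_rightEnd_of_two_lt_distSum {A : ℝ} {p : ℝ³} (hp : 2 < distSum A p) : p ≠ rightEnd A := by
  rintro rfl
  simp [distSum, dist_rightEnd_leftEnd] at hp

lemma ne_leftEnd_of_two_lt_distSum {A : ℝ} {p : ℝ³} (hp : 2 < distSum A p) : p ≠ leftEnd A := by
  rintro rfl
  simp [distSum, dist_comm (leftEnd A), dist_rightEnd_leftEnd] at hp

lemma distSum_mul_distDiff (A : ℝ) (p : ℝ³) : distSum A p * distDiff A p = -4 * (p 0 + A) := by
  have hR₁ : dist p (rightEnd A) ^ 2 = (p 0 + A - 1) ^ 2 + p 1 ^ 2 + p 2 ^ 2 := by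
    rw [dist_rightEnd, Real.sq_sqrt (by positivity)]
  have hR₂ : dist p (leftEnd A) ^ 2 = (p 0 + A + 1) ^ 2 + p 1 ^ 2 + p 2 ^ 2 := by
    rw [dist_leftEnd, Real.sq_sqrt (by positivity)]
  simp only [distSum, distDiff]
  linear_combination hR₁ - hR₂

lemma distSum_eq_and_distDiff_eq {A s d : ℝ} {p : ℝ³} (hd : |d| ≤ s)
    (haxial : p 0 = -A - d * s / 4)
    (hradial : p 1 ^ 2 + p 2 ^ 2 = (s ^ 2 - 4) * (4 - d ^ 2) / 16) :
    distSum A p = s ∧ distDiff A p = d := by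
  obtain ⟨hneg, hpos⟩ := abs_le.1 hd
  have hR₁ : dist p (rightEnd A) = (s + d) / 2 := by
    rw [dist_rightEnd, Real.sqrt_eq_iff_mul_self_eq (by positivity) (by linarith), haxial]
    linear_combination hradial
  have hR₂ : dist p (leftEnd A) = (s - d) / 2 := by
    rw [dist_leftEnd, Real.sqrt_eq_iff_mul_self_eq (by positivity) (by linarith), haxial]
    linear_combination hradial
  constructor <;> simp only [distSum, distDiff, hR₁, hR₂] <;> ring

lemma hasGradientAt_distSum {A : ℝ} {p : ℝ³} (hright : p ≠ rightEnd A) (hleft : p ≠ leftEnd A) :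
    HasGradientAt (distSum A) ((dist p (rightEnd A))⁻¹ • (p - rightEnd A) +
      (dist p (leftEnd A))⁻¹ • (p - leftEnd A)) p := by
  rw [hasGradientAt_iff_hasFDerivAt, map_add]
  exact (hasGradientAt_dist hright).hasFDerivAt.add (hasGradientAt_dist hleft).hasFDerivAt

lemma hasGradientAt_distDiff {A : ℝ} {p : ℝ³} (hright : p ≠ rightEnd A) (hleft : p ≠ leftEnd A) :
    HasGradientAt (distDiff A) ((dist p (rightEnd A))⁻¹ • (p - rightEnd A) -
      (dist p (leftEnd A))⁻¹ • (p - leftEnd A)) p := by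
  rw [hasGradientAt_iff_hasFDerivAt, map_sub]
  exact (hasGradientAt_dist hright).hasFDerivAt.sub (hasGradientAt_dist hleft).hasFDerivAt

lemma hasGradientAt_comp_bipolar {A : ℝ} {p : ℝ³} {V : ℝ × ℝ → ℝ} {s d Vs Vd : ℝ}
    (hright : p ≠ rightEnd A) (hleft : p ≠ leftEnd A)
    (hs : distSum A p = s) (hd : distDiff A p = d)
    (hV : HasFDerivAt V
      (Vs • ContinuousLinearMap.fst ℝ ℝ ℝ + Vd • ContinuousLinearMap.snd ℝ ℝ ℝ) (s, d)) :
    HasGradientAt (fun q => V (distSum A q, distDiff A q))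
      !₂[-(d * (s ^ 2 - 4) * Vs + s * (4 - d ^ 2) * Vd) / (s ^ 2 - d ^ 2),
        4 * (s * Vs - d * Vd) / (s ^ 2 - d ^ 2) * p 1,
        4 * (s * Vs - d * Vd) / (s ^ 2 - d ^ 2) * p 2] p := by
  have haxial : p 0 = -A - s * d / 4 := by
    rw [← hs, ← hd, distSum_mul_distDiff]
    ring
  have hR₁ : dist p (rightEnd A) = (s + d) / 2 := by rw [← hs, ← hd, distSum, distDiff]; ring
  have hR₂ : dist p (leftEnd A) = (s - d) / 2 := by rw [← hs, ← hd, distSum, distDiff]; ring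
  have hsum_ne : s + d ≠ 0 := by
    have := dist_pos.2 hright
    linarith
  have hdiff_ne : s - d ≠ 0 := by
    have := dist_pos.2 hleft
    linarith
  convert hasGradientAt_comp_prodMk (by rwa [hs, hd]) (hasGradientAt_distSum hright hleft)
    (hasGradientAt_distDiff hright hleft) using 1
  rw [hR₁, hR₂, show s ^ 2 - d ^ 2 = (s + d) * (s - d) by ring]
  ext i
  fin_cases i <;>
  · simp only [Fin.zero_eta, Fin.mk_one, Fin.reduceFinMk, Matrix.cons_val,
      rightEnd, leftEnd, haxial, PiLp.add_apply, PiLp.smul_apply, PiLp.sub_apply, smul_eq_mul]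
    field_simp
    ring

end BipolarCoordinates

section Potential

/-- The potential `U` as a function of the bipolar coordinates `(s, d)`. -/
noncomputable def bipolarPotential (A : ℝ) (q : ℝ × ℝ) : ℝ :=
  3 * A * q.2 - (1 / 4) * (3 * A * q.2 * q.1 + 4) * Real.log ((q.1 + 2) / (q.1 - 2))

lemma U_eq_bipolarPotential (A : ℝ) :
    U A = fun p => bipolarPotential A (distSum A p, distDiff A p) := by
  funext p
  simp only [U, bipolarPotential, distSum, distDiff, dist_rightEnd, dist_leftEnd]

lemma hasDerivAt_log_add_div_sub {a s : ℝ} (hadd : s + a ≠ 0) (hsub : s - a ≠ 0) :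
    HasDerivAt (fun s => Real.log ((s + a) / (s - a))) (-(2 * a) / (s ^ 2 - a ^ 2)) s := by
  have hquot := ((hasDerivAt_id s).add_const a).div ((hasDerivAt_id s).sub_const a) hsub
  refine (hquot.log (div_ne_zero hadd hsub)).congr_deriv ?_
  simp only [id, Pi.div_apply, show s ^ 2 - a ^ 2 = (s + a) * (s - a) by ring]
  field_simp
  ring

/-- The partial derivative of `bipolarPotential A` in `s`. -/
noncomputable def bipolarPotentialDerivSum (A s d : ℝ) : ℝ :=
  -(3 / 4) * A * d * Real.log ((s + 2) / (s - 2)) + (3 * A * d * s + 4) / (s ^ 2 - 4)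

/-- The partial derivative of `bipolarPotential A` in `d`, which does not depend on `d`. -/
noncomputable def bipolarPotentialDerivDiff (A s : ℝ) : ℝ :=
  3 * A - (3 / 4) * A * s * Real.log ((s + 2) / (s - 2))

lemma hasFDerivAt_bipolarPotential (A d : ℝ) {s : ℝ} (hs : 2 < s) :
    HasFDerivAt (bipolarPotential A)
      (bipolarPotentialDerivSum A s d • ContinuousLinearMap.fst ℝ ℝ ℝ +
        bipolarPotentialDerivDiff A s • ContinuousLinearMap.snd ℝ ℝ ℝ) (s, d) := by
  have hfst : HasFDerivAt Prod.fst (ContinuousLinearMap.fst ℝ ℝ ℝ) (s, d) := hasFDerivAt_fst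
  have hsnd : HasFDerivAt Prod.snd (ContinuousLinearMap.snd ℝ ℝ ℝ) (s, d) := hasFDerivAt_snd
  have hlog := (hasDerivAt_log_add_div_sub (a := 2) (s := s) (by linarith)
    (by linarith)).comp_hasFDerivAt (s, d) hfst
  have hlin := hsnd.const_mul (3 * A)
  refine (hlin.sub ((((hlin.mul hfst).add_const 4).const_mul (1 / 4)).mul hlog)).congr_fderiv ?_
  simp only [bipolarPotentialDerivSum, bipolarPotentialDerivDiff, Pi.mul_apply,
    Function.comp_apply]
  module

lemma bipolarPotential_axial_combination (A d : ℝ) {s : ℝ} (hs : s ^ 2 - 4 ≠ 0) :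
    d * (s ^ 2 - 4) * bipolarPotentialDerivSum A s d +
      s * (4 - d ^ 2) * bipolarPotentialDerivDiff A s = 4 * F₂ A s d := by
  simp only [bipolarPotentialDerivSum, bipolarPotentialDerivDiff, F₂]
  field_simp
  ring

lemma bipolarPotential_radial_combination (A d : ℝ) {s : ℝ} (hs : s ^ 2 - 4 ≠ 0) :
    s * bipolarPotentialDerivSum A s d - d * bipolarPotentialDerivDiff A s =
      4 * (s + 3 * A * d) / (s ^ 2 - 4) := by
  simp only [bipolarPotentialDerivSum, bipolarPotentialDerivDiff]
  field_simp
  ring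

lemma hasGradientAt_U {A s d : ℝ} {p : ℝ³} (hs : distSum A p = s) (hd : distDiff A p = d)
    (hs2 : 2 < s) :
    HasGradientAt (U A)
      !₂[-4 * F₂ A s d / (s ^ 2 - d ^ 2),
        16 * (s + 3 * A * d) / ((s ^ 2 - 4) * (s ^ 2 - d ^ 2)) * p 1,
        16 * (s + 3 * A * d) / ((s ^ 2 - 4) * (s ^ 2 - d ^ 2)) * p 2] p := by
  have hp : 2 < distSum A p := hs ▸ hs2
  have hs4 : s ^ 2 - 4 ≠ 0 := by nlinarith
  have hgrad := hasGradientAt_comp_bipolar (ne_rightEnd_of_two_lt_distSum hp)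
    (ne_leftEnd_of_two_lt_distSum hp) hs hd (hasFDerivAt_bipolarPotential A d hs2)
  rw [bipolarPotential_axial_combination A d hs4,
    bipolarPotential_radial_combination A d hs4] at hgrad
  have hcoeff : 4 * (4 * (s + 3 * A * d) / (s ^ 2 - 4)) / (s ^ 2 - d ^ 2) =
      16 * (s + 3 * A * d) / ((s ^ 2 - 4) * (s ^ 2 - d ^ 2)) := by
    rw [mul_div_assoc', div_div, ← mul_assoc]
    norm_num only
  rwa [U_eq_bipolarPotential, ← hcoeff, neg_mul]

end Potential

section CircularOrbit

lemma orbitRadius_pos_and_sq {s d r : ℝ} (hs : 2 < s) (hd : |d| < 2)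
    (hr : r = (1 / 4) * √((s ^ 2 - 4) * (4 - d ^ 2))) :
    0 < r ∧ r ^ 2 = (s ^ 2 - 4) * (4 - d ^ 2) / 16 := by
  have hs4 : 0 < s ^ 2 - 4 := by nlinarith
  have hd4 : 0 < 4 - d ^ 2 := by nlinarith [abs_lt.1 hd]
  refine ⟨by rw [hr]; positivity, ?_⟩
  rw [hr, mul_pow, Real.sq_sqrt (by positivity)]
  ring

lemma sq_angularVelocity_of_F₁_eq_zero {A s d c r : ℝ} (hs : 2 < s) (hd : |d| < 2)
    (hr : r ^ 2 = (s ^ 2 - 4) * (4 - d ^ 2) / 16) (hF₁ : F₁ c A s d = 0) :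
    (c / r ^ 2) ^ 2 = 16 * (s + 3 * A * d) / ((s ^ 2 - 4) * (s ^ 2 - d ^ 2)) := by
  have hd2 : d ^ 2 < 2 ^ 2 := sq_lt_sq' (abs_lt.1 hd).1 (abs_lt.1 hd).2
  have hs4 : s ^ 2 - 4 ≠ 0 := by nlinarith
  have hd4 : 4 - d ^ 2 ≠ 0 := by linarith
  have hsd : s ^ 2 - d ^ 2 ≠ 0 := by nlinarith
  rw [hr]
  simp only [F₁] at hF₁
  field_simp
  linear_combination -hF₁

lemma hasGradientAt_U_of_F₂_eq_zero {A s d : ℝ} {p : ℝ³} (hs : 2 < s) (hd : |d| < 2)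
    (haxial : p 0 = -A - d * s / 4)
    (hradial : p 1 ^ 2 + p 2 ^ 2 = (s ^ 2 - 4) * (4 - d ^ 2) / 16) (hF₂ : F₂ A s d = 0) :
    HasGradientAt (U A)
      ((16 * (s + 3 * A * d) / ((s ^ 2 - 4) * (s ^ 2 - d ^ 2))) • !₂[0, p 1, p 2]) p := by
  obtain ⟨hsum, hdiff⟩ := distSum_eq_and_distDiff_eq (hd.trans hs).le haxial hradial
  convert hasGradientAt_U hsum hdiff hs using 1
  ext i
  fin_cases i <;> simp [hF₂]

end CircularOrbit

theorem circular_orbit_general (A s d c : ℝ) (hs : 2 < s) (hd : |d| < 2)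
    (hF₂ : F₂ A s d = 0) (hc : c ≠ 0) (hF₁ : F₁ c A s d = 0) (r x ω T : ℝ)
    (hr : r = (1 / 4) * √((s ^ 2 - 4) * (4 - d ^ 2))) (hx : x = -A - d * s / 4)
    (hω : ω = c / r ^ 2) (hT : T = 2 * Real.pi * r ^ 2 / c) (θ₀ : ℝ) (γ : ℝ → ℝ³)
    (hγ : ∀ t, γ t = !₂[x, r * Real.cos (ω * t + θ₀), r * Real.sin (ω * t + θ₀)]) :
    0 < r ∧
    (∀ t, ¬ (γ t 1 = 0 ∧ γ t 2 = 0 ∧ -1 - A ≤ γ t 0 ∧ γ t 0 ≤ 1 - A)) ∧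
    (∀ t, deriv (deriv γ) t = -gradient (U A) (γ t)) ∧
    (∀ t, γ (t + T) = γ t) := by
  obtain ⟨hr_pos, hr_sq⟩ := orbitRadius_pos_and_sq hs hd hr
  have hradial (t : ℝ) : γ t 1 ^ 2 + γ t 2 ^ 2 = r ^ 2 := by
    simp only [hγ, PiLp.toLp_apply, Matrix.cons_val]
    linear_combination r ^ 2 * Real.sin_sq_add_cos_sq (ω * t + θ₀)
  have hmotion : γ = fun t => !₂[x, 0, 0] + harmonicMotion ω θ₀ !₂[0, r, 0] !₂[0, 0, r] t := by
    ext t i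
    fin_cases i <;> simp [hγ, harmonicMotion, mul_comm]
  refine ⟨hr_pos, ?_, fun t => ?_, fun t => ?_⟩
  · rintro t ⟨hy, hz, -⟩
    exact (pow_pos hr_pos 2).ne (by simpa [hy, hz] using hradial t)
  · have haxial : γ t 0 = -A - d * s / 4 := by simp [hγ, hx]
    rw [(hasGradientAt_U_of_F₂_eq_zero hs hd haxial ((hradial t).trans hr_sq) hF₂).gradient,
      ← sq_angularVelocity_of_F₁_eq_zero hs hd hr_sq hF₁, ← hω, hmotion,
      deriv_deriv_const_add_harmonicMotion]
    congr 2
    ext i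
    fin_cases i <;> simp [harmonicMotion]
  · have hT' : T = 2 * Real.pi / ω := by rw [hT, hω, div_div_eq_mul_div]
    have hω0 : ω ≠ 0 := hω ▸ div_ne_zero hc (pow_ne_zero 2 hr_pos.ne')
    simp only [hmotion, hT', harmonicMotion_periodic hω0 θ₀ _ _ t]

/-- Circular orbit: for $0 \le A < 1/3$, $s^* > 2$, $0 < d^* < 2$ with
$F_2(s^*,d^*;A) = 0$, and $c^* > 0$ with $F_1(s^*,d^*;c^*) = 0$, set
$r^* = \frac14\sqrt{(s^{*2}-4)(4-d^{*2})}$, $x^* = -A - d^*s^*/4$,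
$\omega = c^*/r^{*2}$.  Then for any phase $\theta_0$ the curve
$\gamma(t) = (x^*, r^*\cos(\omega t+\theta_0), r^*\sin(\omega t+\theta_0))$ avoids the
segment $S = \{(\xi,0,0) : -1-A \le \xi \le 1-A\}$, satisfies
$\gamma'' = -\nabla U(\gamma)$, and is periodic with period $T = 2\pi r^{*2}/c^*$. -/
theorem circular_orbit (A : ℝ) (hA0 : 0 ≤ A) (hA : A < 1 / 3)
    (sstar dstar cstar : ℝ) (hs : 2 < sstar) (hd0 : 0 < dstar) (hd2 : dstar < 2)
    (hF₂ : F₂ A sstar dstar = 0) (hc : 0 < cstar) (hF₁ : F₁ cstar A sstar dstar = 0)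
    (rstar xstar ω T : ℝ)
    (hr : rstar = (1 / 4) * Real.sqrt ((sstar ^ 2 - 4) * (4 - dstar ^ 2)))
    (hx : xstar = -A - dstar * sstar / 4)
    (hω : ω = cstar / rstar ^ 2)
    (hT : T = 2 * Real.pi * rstar ^ 2 / cstar)
    (θ₀ : ℝ) (γ : ℝ → EuclideanSpace ℝ (Fin 3))
    (hγ : ∀ t : ℝ, γ t = (WithLp.equiv 2 (Fin 3 → ℝ)).symm
      ![xstar, rstar * Real.cos (ω * t + θ₀), rstar * Real.sin (ω * t + θ₀)]) :
    0 < rstar ∧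
    (∀ t : ℝ, ¬ ((γ t) 1 = 0 ∧ (γ t) 2 = 0 ∧ -1 - A ≤ (γ t) 0 ∧ (γ t) 0 ≤ 1 - A)) ∧
    (∀ t : ℝ, deriv (deriv γ) t = -gradient (U A) (γ t)) ∧
    (∀ t : ℝ, γ (t + T) = γ t) :=
  circular_orbit_general A sstar dstar cstar hs (abs_lt.2 ⟨by linarith, hd2⟩) hF₂ hc.ne' hF₁
    rstar xstar ω T hr hx hω hT θ₀ γ hγ
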